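/- Set U := q^{−(M+1)}Y^{M+1} and V := q^{M+1}ZY^{M} on ℂ^N. Then UV = q⁻¹VU and U^N = V^N = I; for every h = (a,b,c,d) ∈ ℂ⁴ and x ∈ ℂ, the operator matrix L*_h(x) with first row (aqU, xbV⁻¹) and second row (xcV, dU⁻¹) satisfies L*_h(x) = L_h(x)·(q^{M+1}Y^{M}) (each entry of L_h(x) multiplied on the right by q^{M+1}Y^M); consequently, for every L ≥ 1 and h⃗ ∈ (ℂ⁴)^L, the transfer matrix T*_{h⃗}(x) built from the L*-operators satisfies T*_{h⃗}(x) = T_{h⃗}(x)·D^M for all x ∈ ℂ, where D := q^{−L}·(Y ⊗ ⋯ ⊗ Y), and D^M is an inverse square root of D in the sense (D^M)² = D⁻¹. -/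

import Mathlib

/-!
Write `N = 2M+1` and `G = q^{M+1} Y^M`. The single-site claims are computations in the Weyl
algebra. Since `XZ = ω⁻¹ZX`, the general identity `(AB)^n = c^{n(n-1)/2} A^n B^n` for
`BA = c AB` (`mul_pow_of_qcomm`) gives `(AB)^N = 1` whenever `A^N = B^N = 1` and `c^N = 1`,
because `N(N-1)/2 = NM` for odd `N`. Applied to `Z, X` it yields `Y^N = 1`, and applied to
`Z, Y^M` it yields `V^N = 1`. With `Y^N = 1`, `q^N = 1` and `q² = ω` one finds
`qU = YG`, `V⁻¹ = XG`, `V = ZG` and `U⁻¹ = G`, i.e. `L* = L·G` (`Lstar_eq`).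

On the chain, `A ↦ emb j A` is multiplicative and has commuting images at distinct sites
(both because `emb j A` is the tensor product of a family supported at `j`). Hence the factors
`emb j G`, which are scalar in the auxiliary space, can all be moved to the right of the
monodromy matrix (`monoStar_eq`). Their product is `D^M`, since `q^{M+1} = q^{-M}`
(`Dop_pow_M`). Finally `D^N = 1`, so `(D^M)² = D^{N-1} = D⁻¹`.
-/

open Matrix Polynomial

noncomputable section

/-- The operator `Z` on `ℂ^N`: `(Zv)_k = ω^k v_k`. -/
def Zop (N : ℕ) (ω : ℂ) : Matrix (ZMod N) (ZMod N) ℂ :=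
  Matrix.diagonal fun k => ω ^ k.val

/-- The operator `X` on `ℂ^N`: `(Xv)_k = v_{k-1}`. -/
def Xop (N : ℕ) : Matrix (ZMod N) (ZMod N) ℂ :=
  Matrix.of fun k k' => if k' = k - 1 then 1 else 0

/-- The operator `Y := Z * X` on `ℂ^N`. -/
def Yop (N : ℕ) [NeZero N] (ω : ℂ) : Matrix (ZMod N) (ZMod N) ℂ :=
  Zop N ω * Xop N

/-- The `L`-operator `L_h(x)`, a 2×2 matrix of operators on `ℂ^N`, for
`h = (a,b,c,d) ∈ ℂ⁴`: first row `(aY, xbX)`, second row `(xcZ, d·I)`. -/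
def Lop (N : ℕ) [NeZero N] (ω : ℂ) (h : ℂ × ℂ × ℂ × ℂ) (x : ℂ) :
    Matrix (Fin 2) (Fin 2) (Matrix (ZMod N) (ZMod N) ℂ) :=
  Matrix.of
    ![![h.1 • Yop N ω, (x * h.2.1) • Xop N],
      ![(x * h.2.2.1) • Zop N ω, h.2.2.2 • (1 : Matrix (ZMod N) (ZMod N) ℂ)]]

/-- Embedding of an operator on `ℂ^N` as an operator on `⊗^L ℂ^N` acting on the `j`-th
tensor slot. -/
def emb (N L : ℕ) [NeZero N] [NeZero L] (j : ZMod L) (A : Matrix (ZMod N) (ZMod N) ℂ) :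
    Matrix (ZMod L → ZMod N) (ZMod L → ZMod N) ℂ :=
  Matrix.of fun k k' =>
    A (k j) (k' j) * ∏ i ∈ Finset.univ.erase j, (if k i = k' i then (1 : ℂ) else 0)

/-- The monodromy matrix `L_{h⃗}(x) = L_{h₀}(x) ⋯ L_{h_{L-1}}(x)`, a 2×2 matrix of
operators on `⊗^L ℂ^N`, the operator entries of the `j`-th factor acting on the
`j`-th tensor slot. -/
def mono (N L : ℕ) [NeZero N] [NeZero L] (ω : ℂ) (h : ZMod L → ℂ × ℂ × ℂ × ℂ) (x : ℂ) :
    Matrix (Fin 2) (Fin 2) (Matrix (ZMod L → ZMod N) (ZMod L → ZMod N) ℂ) :=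
  ((List.finRange L).map fun j =>
    (Lop N ω (h ((j : ℕ) : ZMod L)) x).map (emb N L ((j : ℕ) : ZMod L))).prod

/-- The transfer matrix `T_{h⃗}(x)`: the trace of the monodromy matrix over the 2×2
auxiliary indices. -/
def transfer (N L : ℕ) [NeZero N] [NeZero L] (ω : ℂ) (h : ZMod L → ℂ × ℂ × ℂ × ℂ)
    (x : ℂ) : Matrix (ZMod L → ZMod N) (ZMod L → ZMod N) ℂ :=
  mono N L ω h x 0 0 + mono N L ω h x 1 1

/-- The operator `U := q^{−(M+1)} Y^{M+1}` on `ℂ^N` (with `N = 2M+1`). -/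
def Uop (N M : ℕ) [NeZero N] (ω q : ℂ) : Matrix (ZMod N) (ZMod N) ℂ :=
  (q ^ (M + 1))⁻¹ • (Yop N ω) ^ (M + 1)

/-- The operator `V := q^{M+1} Z Y^{M}` on `ℂ^N` (with `N = 2M+1`). -/
def Vop (N M : ℕ) [NeZero N] (ω q : ℂ) : Matrix (ZMod N) (ZMod N) ℂ :=
  q ^ (M + 1) • (Zop N ω * (Yop N ω) ^ M)

/-- The `L*`-operator: first row `(aqU, xbV⁻¹)`, second row `(xcV, dU⁻¹)`. -/
def Lstar (N M : ℕ) [NeZero N] (ω q : ℂ) (h : ℂ × ℂ × ℂ × ℂ) (x : ℂ) :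
    Matrix (Fin 2) (Fin 2) (Matrix (ZMod N) (ZMod N) ℂ) :=
  Matrix.of
    ![![(h.1 * q) • Uop N M ω q, (x * h.2.1) • (Vop N M ω q)⁻¹],
      ![(x * h.2.2.1) • Vop N M ω q, h.2.2.2 • (Uop N M ω q)⁻¹]]

/-- The monodromy matrix built from the `L*`-operators. -/
def monoStar (N M L : ℕ) [NeZero N] [NeZero L] (ω q : ℂ) (h : ZMod L → ℂ × ℂ × ℂ × ℂ)
    (x : ℂ) : Matrix (Fin 2) (Fin 2) (Matrix (ZMod L → ZMod N) (ZMod L → ZMod N) ℂ) :=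
  ((List.finRange L).map fun j =>
    (Lstar N M ω q (h ((j : ℕ) : ZMod L)) x).map (emb N L ((j : ℕ) : ZMod L))).prod

/-- The transfer matrix `T*_{h⃗}(x)` built from the `L*`-operators. -/
def transferStar (N M L : ℕ) [NeZero N] [NeZero L] (ω q : ℂ) (h : ZMod L → ℂ × ℂ × ℂ × ℂ)
    (x : ℂ) : Matrix (ZMod L → ZMod N) (ZMod L → ZMod N) ℂ :=
  monoStar N M L ω q h x 0 0 + monoStar N M L ω q h x 1 1

/-- The operator `D := q^{−L}·(Y ⊗ ⋯ ⊗ Y)` on `⊗^L ℂ^N`. -/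
def Dop (N L : ℕ) [NeZero N] [NeZero L] (ω q : ℂ) :
    Matrix (ZMod L → ZMod N) (ZMod L → ZMod N) ℂ :=
  (q ^ L)⁻¹ • ((List.finRange L).map fun j => emb N L ((j : ℕ) : ZMod L) (Yop N ω)).prod

/-! ### Weyl pairs -/

section Weyl

variable {R : Type*} [Ring R] [Algebra ℂ R]

theorem pow_mul_of_qcomm {c : ℂ} {A B : R} (h : B * A = c • (A * B)) (n : ℕ) :
    B ^ n * A = c ^ n • (A * B ^ n) := by
  induction n with
  | zero => simp
  | succ n ih =>
    rw [pow_succ, mul_assoc, h, mul_smul_comm, ← mul_assoc, ih, smul_mul_assoc, smul_smul,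
      mul_assoc, pow_succ c, mul_comm c]

theorem mul_pow_of_qcomm {c : ℂ} {A B : R} (h : B * A = c • (A * B)) (n : ℕ) :
    (A * B) ^ n = c ^ (∑ i ∈ Finset.range n, i) • (A ^ n * B ^ n) := by
  induction n with
  | zero => simp
  | succ n ih =>
    have h1 : A ^ n * B ^ n * (A * B) = c ^ n • (A ^ (n + 1) * B ^ (n + 1)) := by
      rw [mul_assoc, ← mul_assoc (B ^ n), pow_mul_of_qcomm h, smul_mul_assoc, mul_smul_comm,
        pow_succ, pow_succ]
      simp only [mul_assoc]
    rw [pow_succ, ih, smul_mul_assoc, h1, smul_smul, Finset.sum_range_succ, pow_add c]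

/-- For odd `N = 2M+1` the factor `c^{N(N-1)/2} = (c^N)^M` is trivial, so if `A^N = B^N = 1`
and `A`, `B` commute up to an `N`-th root of unity, then `(AB)^N = 1`. -/
theorem mul_pow_eq_one_of_qcomm {c : ℂ} {A B : R} (h : B * A = c • (A * B)) (M : ℕ)
    (hc : c ^ (2 * M + 1) = 1) (hA : A ^ (2 * M + 1) = 1) (hB : B ^ (2 * M + 1) = 1) :
    (A * B) ^ (2 * M + 1) = 1 := by
  have hs : ∑ i ∈ Finset.range (2 * M + 1), i = (2 * M + 1) * M := by
    have := Finset.sum_range_id_mul_two (2 * M + 1)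
    rw [Nat.add_sub_cancel] at this
    nlinarith
  rw [mul_pow_of_qcomm h, hs, pow_mul, hc, hA, hB]
  simp

end Weyl

/-! ### The operators on a single site -/

theorem Xop_pow (N : ℕ) [NeZero N] (n : ℕ) :
    Xop N ^ n = Matrix.of fun k k' => if k' = k - (n : ZMod N) then (1 : ℂ) else 0 := by
  induction n with
  | zero =>
    ext k k'
    simp [Matrix.one_apply, eq_comm]
  | succ n ih =>
    ext k k'
    rw [pow_succ, ih, Matrix.mul_apply]
    simp only [Xop, Matrix.of_apply, ite_mul, one_mul, zero_mul, Finset.sum_ite_eq',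
      Finset.mem_univ, if_true, Nat.cast_succ, sub_sub]

theorem Xop_pow_self (N : ℕ) [NeZero N] : Xop N ^ N = 1 := by
  rw [Xop_pow]
  ext k k'
  simp [Matrix.one_apply, eq_comm]

theorem Zop_pow_self (N : ℕ) [NeZero N] {ω : ℂ} (hω : ω ^ N = 1) : Zop N ω ^ N = 1 := by
  rw [Zop, Matrix.diagonal_pow, ← Matrix.diagonal_one]
  congr 1
  funext k
  simp [← pow_mul, mul_comm k.val N, pow_mul ω N, hω]

/-- Since `ω ^ N = 1`, the wrap-around of `ZMod.val` at `N` does not matter. -/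
theorem pow_val_add_one (N : ℕ) [NeZero N] {ω : ℂ} (hω : ω ^ N = 1) (k : ZMod N) :
    ω ^ (k + 1).val = ω ^ k.val * ω := by
  rw [ZMod.val_add, ← pow_eq_pow_mod _ hω, pow_add]
  rcases eq_or_ne N 1 with rfl | hN
  · simp_all
  · have : Fact (1 < N) := ⟨by have := NeZero.ne N; omega⟩
    rw [ZMod.val_one, pow_one]

theorem Xop_mul_Zop (N : ℕ) [NeZero N] {ω : ℂ} (hω : ω ^ N = 1) :
    Xop N * Zop N ω = ω⁻¹ • (Zop N ω * Xop N) := by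
  have h0 : ω ≠ 0 := by
    rintro rfl
    simp [NeZero.ne N] at hω
  ext k k'
  rw [Zop, Matrix.mul_diagonal, Matrix.smul_apply, Matrix.diagonal_mul]
  by_cases h : k' = k - 1
  · obtain rfl : k = k' + 1 := by rw [h]; ring
    have h1 : k' = k' + 1 - 1 := by ring
    rw [Xop, Matrix.of_apply, if_pos h1, pow_val_add_one N hω, smul_eq_mul]
    field_simp
  · simp [Xop, h]

section Site

variable {M : ℕ} {ω q : ℂ}

theorem Yop_mul_Zop (N : ℕ) [NeZero N] {ω : ℂ} (hω : ω ^ N = 1) :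
    Yop N ω * Zop N ω = ω⁻¹ • (Zop N ω * Yop N ω) := by
  rw [Yop, mul_assoc, Xop_mul_Zop N hω, mul_smul_comm]

theorem Yop_mul_Xop (N : ℕ) [NeZero N] {ω : ℂ} (hω : ω ^ N = 1) :
    Yop N ω * Xop N = ω • (Xop N * Yop N ω) := by
  have h0 : ω ≠ 0 := by
    rintro rfl
    simp [NeZero.ne N] at hω
  rw [Yop, ← mul_assoc (Xop N), Xop_mul_Zop N hω, smul_mul_assoc, smul_smul, mul_inv_cancel₀ h0,
    one_smul]

theorem Yop_pow_self (hω : ω ^ (2 * M + 1) = 1) : Yop (2 * M + 1) ω ^ (2 * M + 1) = 1 :=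
  mul_pow_eq_one_of_qcomm (Xop_mul_Zop _ hω) M (by rw [inv_pow, hω, inv_one])
    (Zop_pow_self _ hω) (Xop_pow_self _)

theorem Uop_mul_Vop (hω : ω ^ (2 * M + 1) = 1) (hq : q = ω ^ (M + 1)) :
    Uop (2 * M + 1) M ω q * Vop (2 * M + 1) M ω q =
      q⁻¹ • (Vop (2 * M + 1) M ω q * Uop (2 * M + 1) M ω q) := by
  have h := pow_mul_of_qcomm (Yop_mul_Zop _ hω) (M + 1)
  rw [inv_pow, ← hq] at h
  rw [Uop, Vop]
  simp only [smul_mul_assoc, mul_smul_comm, smul_smul]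
  rw [← mul_assoc, h, smul_mul_assoc, smul_smul, mul_assoc (Zop _ _), mul_assoc (Zop _ _),
    ← pow_add, ← pow_add, add_comm M (M + 1)]
  congr 1
  ring

theorem q_pow_self (hω : ω ^ (2 * M + 1) = 1) (hq : q = ω ^ (M + 1)) : q ^ (2 * M + 1) = 1 := by
  rw [hq, ← pow_mul, mul_comm, pow_mul, hω, one_pow]

theorem q_sq (hω : ω ^ (2 * M + 1) = 1) (hq : q = ω ^ (M + 1)) : q ^ 2 = ω := by
  rw [hq, ← pow_mul, show (M + 1) * 2 = 2 * M + 1 + 1 by ring, pow_succ, hω, one_mul]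

theorem q_ne_zero (hω : ω ^ (2 * M + 1) = 1) (hq : q = ω ^ (M + 1)) : q ≠ 0 := by
  rintro rfl
  simpa using q_pow_self hω hq

theorem q_pow_succ (hω : ω ^ (2 * M + 1) = 1) (hq : q = ω ^ (M + 1)) :
    q ^ (M + 1) = (q ^ M)⁻¹ := by
  apply eq_inv_of_mul_eq_one_left
  rw [← pow_add, ← q_pow_self hω hq]
  congr 1
  ring

theorem Uop_pow_self (hω : ω ^ (2 * M + 1) = 1) (hq : q = ω ^ (M + 1)) :
    Uop (2 * M + 1) M ω q ^ (2 * M + 1) = 1 := by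
  rw [Uop, _root_.smul_pow, inv_pow, pow_right_comm, q_pow_self hω hq,
    pow_right_comm (Yop _ _), Yop_pow_self hω]
  simp

theorem Vop_pow_self (hω : ω ^ (2 * M + 1) = 1) (hq : q = ω ^ (M + 1)) :
    Vop (2 * M + 1) M ω q ^ (2 * M + 1) = 1 := by
  have h := pow_mul_of_qcomm (Yop_mul_Zop _ hω) M
  have h2 := mul_pow_eq_one_of_qcomm h M
    (by rw [pow_right_comm, inv_pow, hω, inv_one, one_pow]) (Zop_pow_self _ hω)
    (by rw [pow_right_comm, Yop_pow_self hω, one_pow])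
  rw [Vop, _root_.smul_pow, h2, pow_right_comm, q_pow_self hω hq]
  simp

/-- The single-site twist `q^{M+1} Y^M`, which relates `L_h` and `L*_h`; it is `(q⁻¹Y)^M`. -/
def twist (M : ℕ) (ω q : ℂ) : Matrix (ZMod (2 * M + 1)) (ZMod (2 * M + 1)) ℂ :=
  q ^ (M + 1) • (Yop (2 * M + 1) ω) ^ M

theorem Uop_inv (hω : ω ^ (2 * M + 1) = 1) (hq : q = ω ^ (M + 1)) :
    (Uop (2 * M + 1) M ω q)⁻¹ = twist M ω q := by
  apply Matrix.inv_eq_right_inv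
  rw [Uop, twist, smul_mul_smul_comm, ← pow_add, show M + 1 + M = 2 * M + 1 by ring,
    Yop_pow_self hω, inv_mul_cancel₀ (pow_ne_zero _ (q_ne_zero hω hq)), one_smul]

theorem Vop_inv (hω : ω ^ (2 * M + 1) = 1) (hq : q = ω ^ (M + 1)) :
    (Vop (2 * M + 1) M ω q)⁻¹ = Xop (2 * M + 1) * twist M ω q := by
  apply Matrix.inv_eq_right_inv
  have h := pow_mul_of_qcomm (Yop_mul_Xop _ hω) M
  -- `Z Y^M X Y^M = ω^M Z X Y^{2M} = ω^M Y^N`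
  have h2 : Zop (2 * M + 1) ω * Yop (2 * M + 1) ω ^ M *
      (Xop (2 * M + 1) * Yop (2 * M + 1) ω ^ M) = ω ^ M • 1 := by
    rw [mul_assoc, ← mul_assoc (Yop (2 * M + 1) ω ^ M), h, smul_mul_assoc, mul_smul_comm,
      mul_assoc (Xop _), ← mul_assoc (Zop _ _), ← pow_add,
      show Zop (2 * M + 1) ω * Xop (2 * M + 1) = Yop (2 * M + 1) ω from rfl, ← pow_succ',
      ← two_mul, Yop_pow_self hω]
  have h3 : q ^ (M + 1) * q ^ (M + 1) * ω ^ M = 1 := by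
    rw [← mul_pow, ← sq, q_sq hω hq, ← pow_add, ← hω]
    congr 1
    ring
  rw [Vop, twist, mul_smul_comm, smul_mul_smul_comm, h2, smul_smul, h3, one_smul]

theorem Lstar_eq (hω : ω ^ (2 * M + 1) = 1) (hq : q = ω ^ (M + 1)) (h : ℂ × ℂ × ℂ × ℂ) (x : ℂ) :
    Lstar (2 * M + 1) M ω q h x = (Lop (2 * M + 1) ω h x).map fun A => A * twist M ω q := by
  have hU : q • Uop (2 * M + 1) M ω q = Yop (2 * M + 1) ω * twist M ω q := by
    have h0 := q_ne_zero hω hq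
    rw [Uop, twist, smul_smul, mul_smul_comm, ← pow_succ']
    congr 1
    rw [pow_succ' q M, mul_inv, mul_inv_cancel_left₀ h0, ← pow_succ', q_pow_succ hω hq]
  have hV : Vop (2 * M + 1) M ω q = Zop (2 * M + 1) ω * twist M ω q := by
    rw [Vop, twist, mul_smul_comm]
  ext i j : 2
  fin_cases i <;> fin_cases j
  · simp [Lstar, Lop, mul_smul, hU]
  · simp [Lstar, Lop, Vop_inv hω hq]
  · simp [Lstar, Lop, hV]
  · simp [Lstar, Lop, Uop_inv hω hq]

end Site

/-! ### Operators on the tensor product -/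

/-- The tensor product `⊗_j A_j` of a family of operators, as a monoid homomorphism in the
family. -/
def tensorHom (N L : ℕ) [NeZero N] [NeZero L] :
    (ZMod L → Matrix (ZMod N) (ZMod N) ℂ) →*
      Matrix (ZMod L → ZMod N) (ZMod L → ZMod N) ℂ where
  toFun A := Matrix.of fun k k' => ∏ i, A i (k i) (k' i)
  map_one' := by
    ext k k'
    simp only [Pi.one_apply, Matrix.of_apply, Matrix.one_apply, Finset.prod_ite_zero,
      Finset.mem_univ, true_imp_iff, Finset.prod_const_one, funext_iff]
  map_mul' A B := by
    ext k k'
    simp only [Matrix.of_apply, Pi.mul_apply, Matrix.mul_apply, Finset.prod_univ_sum,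
      Fintype.piFinset_univ, Finset.prod_mul_distrib]

theorem emb_eq_tensorHom (N L : ℕ) [NeZero N] [NeZero L] (j : ZMod L)
    (A : Matrix (ZMod N) (ZMod N) ℂ) : emb N L j A = tensorHom N L (Pi.mulSingle j A) := by
  ext k k'
  simp only [emb, tensorHom, MonoidHom.coe_mk, OneHom.coe_mk, Matrix.of_apply]
  rw [← Finset.mul_prod_erase _ _ (Finset.mem_univ j), Pi.mulSingle_eq_same]
  congr 1
  refine Finset.prod_congr rfl fun i hi => ?_
  rw [Pi.mulSingle_eq_of_ne (Finset.ne_of_mem_erase hi), Matrix.one_apply]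

theorem emb_mul (N L : ℕ) [NeZero N] [NeZero L] (j : ZMod L)
    (A B : Matrix (ZMod N) (ZMod N) ℂ) : emb N L j (A * B) = emb N L j A * emb N L j B := by
  simp only [emb_eq_tensorHom, Pi.mulSingle_mul, map_mul]

theorem emb_one (N L : ℕ) [NeZero N] [NeZero L] (j : ZMod L) : emb N L j 1 = 1 := by
  rw [emb_eq_tensorHom, Pi.mulSingle_one, map_one]

theorem emb_pow (N L : ℕ) [NeZero N] [NeZero L] (j : ZMod L)
    (A : Matrix (ZMod N) (ZMod N) ℂ) (n : ℕ) : emb N L j (A ^ n) = emb N L j A ^ n := by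
  induction n with
  | zero => simp [emb_one]
  | succ n ih => rw [pow_succ, emb_mul, ih, pow_succ]

theorem emb_smul (N L : ℕ) [NeZero N] [NeZero L] (j : ZMod L) (c : ℂ)
    (A : Matrix (ZMod N) (ZMod N) ℂ) : emb N L j (c • A) = c • emb N L j A := by
  ext k k'
  simp [emb, mul_assoc]

theorem emb_commute (N L : ℕ) [NeZero N] [NeZero L] {i j : ZMod L} (h : i ≠ j)
    (A B : Matrix (ZMod N) (ZMod N) ℂ) : Commute (emb N L i A) (emb N L j B) := by
  rw [emb_eq_tensorHom, emb_eq_tensorHom]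
  have hc : Commute (Pi.mulSingle i A : ZMod L → Matrix (ZMod N) (ZMod N) ℂ)
      (Pi.mulSingle j B) :=
    Pi.mulSingle_commute (f := fun _ : ZMod L => Matrix (ZMod N) (ZMod N) ℂ) h A B
  exact hc.map (tensorHom N L)

/-! ### Ordered products over the sites -/

/-- In an ordered product of `A i * S i`, the factors `S i` can be collected on the right as soon
as each of them commutes with every `A j`, `j ≠ i`. -/
theorem list_prod_mul {ι R : Type*} [Monoid R] (A S : ι → R) (l : List ι) (hl : l.Nodup)
    (h : ∀ i ∈ l, ∀ j ∈ l, i ≠ j → Commute (S i) (A j)) :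
    (l.map fun i => A i * S i).prod = (l.map A).prod * (l.map S).prod := by
  induction l with
  | nil => simp
  | cons a l ih =>
    rw [List.nodup_cons] at hl
    have hc : Commute (S a) (l.map A).prod := by
      refine Commute.list_prod_right _ _ fun x hx => ?_
      obtain ⟨j, hj, rfl⟩ := List.mem_map.1 hx
      exact h a List.mem_cons_self j (List.mem_cons_of_mem _ hj) fun e => hl.1 (e ▸ hj)
    simp only [List.map_cons, List.prod_cons]
    rw [ih hl.2 fun i hi j hj => h i (List.mem_cons_of_mem _ hi) j (List.mem_cons_of_mem _ hj)]
    simp only [mul_assoc]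
    rw [← mul_assoc (S a), hc.eq, mul_assoc]

theorem list_prod_pow {ι R : Type*} [Monoid R] (S : ι → R) (l : List ι) (hl : l.Nodup)
    (h : ∀ i ∈ l, ∀ j ∈ l, i ≠ j → Commute (S i) (S j)) (n : ℕ) :
    (l.map S).prod ^ n = (l.map fun i => S i ^ n).prod := by
  induction n with
  | zero => simp
  | succ n ih =>
    simp only [pow_succ]
    rw [ih, list_prod_mul (fun i => S i ^ n) S l hl
      fun i hi j hj hij => (h i hi j hj hij).pow_right n]

theorem list_prod_smul {ι R : Type*} [Ring R] [Algebra ℂ R] (c : ℂ) (S : ι → R)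
    (l : List ι) :
    (l.map fun i => c • S i).prod = c ^ l.length • (l.map S).prod := by
  induction l with
  | nil => simp
  | cons a l ih =>
    simp only [List.map_cons, List.prod_cons, List.length_cons]
    rw [ih, smul_mul_smul_comm, pow_succ']

theorem natCast_ne_of_mem_range {L i j : ℕ} (hi : i ∈ List.range L) (hj : j ∈ List.range L)
    (h : i ≠ j) : (i : ZMod L) ≠ (j : ZMod L) := by
  rw [List.mem_range] at hi hj
  rwa [Ne, ZMod.natCast_eq_natCast_iff', Nat.mod_eq_of_lt hi, Nat.mod_eq_of_lt hj]

/-- The site list occurring in `mono`, `monoStar` and `Dop` is `List.finRange L` coerced to a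
list of natural numbers, that is, `List.range L`. -/
theorem finRange_bind_val (L : ℕ) :
    (do let a ← List.finRange L; pure (a : ℕ)) = List.range L := by
  simp [← List.map_eq_flatMap]

section Chain

variable {M : ℕ} {ω q : ℂ}

theorem Dop_pow (L : ℕ) [NeZero L] (n : ℕ) :
    Dop (2 * M + 1) L ω q ^ n = ((q ^ L)⁻¹) ^ n •
      ((List.range L).map fun j : ℕ =>
        emb (2 * M + 1) L (j : ZMod L) (Yop (2 * M + 1) ω ^ n)).prod := by
  rw [Dop, _root_.smul_pow, finRange_bind_val, list_prod_pow _ _ List.nodup_range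
    fun i hi j hj hij => emb_commute _ _ (natCast_ne_of_mem_range hi hj hij) _ _]
  simp only [emb_pow]

theorem Dop_pow_self (hω : ω ^ (2 * M + 1) = 1) (hq : q = ω ^ (M + 1)) (L : ℕ) [NeZero L] :
    Dop (2 * M + 1) L ω q ^ (2 * M + 1) = 1 := by
  rw [Dop_pow, Yop_pow_self hω, inv_pow, pow_right_comm, q_pow_self hω hq]
  simp [emb_one]

theorem Dop_pow_M (hω : ω ^ (2 * M + 1) = 1) (hq : q = ω ^ (M + 1)) (L : ℕ) [NeZero L] :
    Dop (2 * M + 1) L ω q ^ M =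
      ((List.range L).map fun j : ℕ =>
        emb (2 * M + 1) L (j : ZMod L) (twist M ω q)).prod := by
  simp only [twist, emb_smul]
  rw [list_prod_smul, Dop_pow, List.length_range, q_pow_succ hω hq, inv_pow, inv_pow,
    ← pow_mul, ← pow_mul, mul_comm L M]

/-- The twists are scalar in the auxiliary space, and the twist on site `i` commutes with the
`L`-operators on all other sites, so all of them can be collected on the right. -/
theorem monoStar_eq (hω : ω ^ (2 * M + 1) = 1) (hq : q = ω ^ (M + 1)) (L : ℕ) [NeZero L]
    (h : ZMod L → ℂ × ℂ × ℂ × ℂ) (x : ℂ) :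
    monoStar (2 * M + 1) M L ω q h x =
      mono (2 * M + 1) L ω h x * Matrix.scalar (Fin 2) (Dop (2 * M + 1) L ω q ^ M) := by
  have hloc : ∀ j : ℕ,
      (Lstar (2 * M + 1) M ω q (h (j : ZMod L)) x).map
          (emb (2 * M + 1) L (j : ZMod L)) =
        (Lop (2 * M + 1) ω (h (j : ZMod L)) x).map
            (emb (2 * M + 1) L (j : ZMod L)) *
          Matrix.scalar (Fin 2) (emb (2 * M + 1) L (j : ZMod L) (twist M ω q)) := by
    intro j
    rw [Lstar_eq hω hq]
    ext i k : 2
    rw [Matrix.scalar_apply, Matrix.mul_diagonal]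
    simp only [Matrix.map_apply, emb_mul]
  rw [monoStar, mono, finRange_bind_val, Dop_pow_M hω hq, map_list_prod, List.map_map]
  simp only [hloc]
  refine list_prod_mul _ (fun j : ℕ => Matrix.scalar (Fin 2)
    (emb (2 * M + 1) L (j : ZMod L) (twist M ω q))) _ List.nodup_range ?_
  intro i hi j hj hij
  rw [commute_iff_eq, Matrix.scalar_apply]
  refine Matrix.ext fun a b => ?_
  rw [Matrix.mul_diagonal, Matrix.diagonal_mul, Matrix.map_apply]
  exact (emb_commute (2 * M + 1) L (natCast_ne_of_mem_range hi hj hij) _ _).eq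

end Chain

/-- with `U = q^{−(M+1)}Y^{M+1}`, `V = q^{M+1}ZY^M` one has `UV = q⁻¹VU`,
`U^N = V^N = I`; `L*_h(x) = L_h(x)·(q^{M+1}Y^M)` entrywise; and for every `L ≥ 1` and
`h⃗`, `T*_{h⃗}(x) = T_{h⃗}(x)·D^M` where `(D^M)² = D⁻¹`. -/
theorem Lstar_transferStar_relation (M : ℕ) (hM : 1 ≤ M) (ω : ℂ)
    (hω : IsPrimitiveRoot ω (2 * M + 1)) (q : ℂ) (hq : q = ω ^ (M + 1)) :
    (Uop (2 * M + 1) M ω q * Vop (2 * M + 1) M ω q =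
        q⁻¹ • (Vop (2 * M + 1) M ω q * Uop (2 * M + 1) M ω q)) ∧
    (Uop (2 * M + 1) M ω q ^ (2 * M + 1) = 1) ∧
    (Vop (2 * M + 1) M ω q ^ (2 * M + 1) = 1) ∧
    (∀ (h : ℂ × ℂ × ℂ × ℂ) (x : ℂ),
      Lstar (2 * M + 1) M ω q h x =
        (Lop (2 * M + 1) ω h x).map fun A => A * (q ^ (M + 1) • (Yop (2 * M + 1) ω) ^ M)) ∧
    (∀ (L : ℕ) [NeZero L] (h : ZMod L → ℂ × ℂ × ℂ × ℂ) (x : ℂ),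
      transferStar (2 * M + 1) M L ω q h x =
        transfer (2 * M + 1) L ω h x * (Dop (2 * M + 1) L ω q) ^ M) ∧
    (∀ (L : ℕ) [NeZero L],
      ((Dop (2 * M + 1) L ω q) ^ M) ^ 2 = (Dop (2 * M + 1) L ω q)⁻¹) := by
  have h1 := hω.pow_eq_one
  refine ⟨Uop_mul_Vop h1 hq, Uop_pow_self h1 hq, Vop_pow_self h1 hq, Lstar_eq h1 hq, ?_, ?_⟩
  · intro L _ h x
    rw [transferStar, transfer, monoStar_eq h1 hq, Matrix.scalar_apply, Matrix.mul_diagonal,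
      Matrix.mul_diagonal, add_mul]
  · intro L _
    symm
    apply Matrix.inv_eq_right_inv
    rw [← pow_mul, ← pow_succ', mul_comm M 2, Dop_pow_self h1 hq]

end
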